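/- arXiv:2409.03922 — 6 statements merged into one kernel-verified Lean document; each statement's English description precedes it below -/
import Mathlib

section
/- Let R be a commutative ring, V and V' finite rank free R-modules, and λ, λ' ∈ R with λ − λ' a unit of R. Let A = ∑_{i≥0} A_i t^i ∈ (End_R V)[[t]] and A' = ∑_{i≥0} A'_i t^i ∈ (End_R V')[[t]] be power series of endomorphisms such that A_0 − λ·id_V is nilpotent and A'_0 − λ'·id_{V'} is nilpotent. If f = ∑_{i≥0} f_i t^i ∈ Hom_R(V, V')[[t]] satisfies the intertwining relation t^2·(df/dt) = f·A − A'·f in Hom_R(V, V')[[t]], then f = 0. -/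
theorem key_sylvester {R : Type*} [CommRing R] {V V' : Type*}
    [AddCommGroup V] [Module R V] [AddCommGroup V'] [Module R V']
    (lam lam' : R) (hunit : IsUnit (lam - lam'))
    (B : Module.End R V) (B' : Module.End R V')
    (hB : IsNilpotent (B - lam • (1 : Module.End R V)))
    (hB' : IsNilpotent (B' - lam' • (1 : Module.End R V')))
    (g : V →ₗ[R] V') (hg : g ∘ₗ B = B' ∘ₗ g) : g = 0 := by
  have hu : IsUnit (B - lam' • (1 : Module.End R V)) := by
    have h1 : IsUnit (algebraMap R (Module.End R V) (lam - lam')) := hunit.map _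
    have h2 := hB.isUnit_add_left_of_commute h1 (Algebra.commutes _ _).symm
    have h3 : algebraMap R (Module.End R V) (lam - lam') + (B - lam • (1 : Module.End R V))
        = B - lam' • (1 : Module.End R V) := by
      rw [Algebra.algebraMap_eq_smul_one, sub_smul]
      abel
    rw [h3] at h2
    exact h2
  obtain ⟨k, hk⟩ := hB'
  have hpow : ∀ m : ℕ, g ∘ₗ ((B - lam' • (1 : Module.End R V)) ^ m)
      = ((B' - lam' • (1 : Module.End R V')) ^ m) ∘ₗ g := by
    intro m
    induction m with
    | zero => ext x; simp
    | succ m ih =>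
      ext x
      have e1 := LinearMap.congr_fun ih ((B - lam' • (1 : Module.End R V)) x)
      have e2 := LinearMap.congr_fun hg x
      simp only [LinearMap.comp_apply] at e1 e2
      simp only [LinearMap.comp_apply, pow_succ, Module.End.mul_apply]
      rw [e1]
      congr 1
      simp [e2]
  have h0 := hpow k
  rw [hk] at h0
  obtain ⟨u, hu'⟩ := hu.pow k
  rw [← hu'] at h0
  ext x
  have e := LinearMap.congr_fun h0 ((↑u⁻¹ : Module.End R V) x)
  simp only [LinearMap.comp_apply, LinearMap.zero_apply, ← Module.End.mul_apply, u.mul_inv] at e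
  simpa using e

/-- Lemma 2.2 of the paper. Let `R` be a commutative ring, `V, V'` finite rank
free `R`-modules, and `λ, λ' ∈ R` with `λ - λ'` a unit. Let `A = ∑ A_i t^i` and `A' = ∑ A'_i t^i`
be power series of endomorphisms (given by their coefficient sequences) with `A_0 - λ·id` and
`A'_0 - λ'·id` nilpotent. If `f = ∑ f_i t^i` satisfies `t²·(df/dt) = f·A - A'·f`, i.e.
coefficientwise `∑_{i+j=r} (f_i ∘ A_j - A'_j ∘ f_i) = (r-1)·f_{r-1}` for all `r` (with the
convention that the right-hand side vanishes for `r = 0`), then `f = 0`. -/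
theorem statement2 {R : Type*} [CommRing R] {V V' : Type*}
    [AddCommGroup V] [Module R V] [AddCommGroup V'] [Module R V']
    [Module.Free R V] [Module.Finite R V] [Module.Free R V'] [Module.Finite R V']
    (lam lam' : R) (hunit : IsUnit (lam - lam'))
    (A : ℕ → Module.End R V) (A' : ℕ → Module.End R V')
    (hA : IsNilpotent (A 0 - lam • (1 : Module.End R V)))
    (hA' : IsNilpotent (A' 0 - lam' • (1 : Module.End R V')))
    (f : ℕ → (V →ₗ[R] V'))
    (hf : ∀ r : ℕ,
      (∑ i ∈ Finset.range (r + 1), ((f i) ∘ₗ (A (r - i)) - (A' (r - i)) ∘ₗ (f i)))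
        = (r - 1) • f (r - 1)) :
    ∀ n, f n = 0 := by
  intro n
  induction n using Nat.strong_induction_on with
  | _ n ih =>
    have h := hf n
    have hr : (n - 1) • f (n - 1) = 0 := by
      rcases n with _ | n
      · simp
      · rw [ih _ (by omega), smul_zero]
    rw [Finset.sum_range_succ, Finset.sum_eq_zero, hr, zero_add, Nat.sub_self] at h
    · exact key_sylvester lam lam' hunit (A 0) (A' 0) hA hA' (f n) (sub_eq_zero.mp h)
    · intro i hi
      rw [ih i (Finset.mem_range.mp hi)]
      simp
end

section
/- Let k be a field of characteristic p > 0, V a finite-dimensional k-vector space, and A = ∑_{i≥0} A_i t^i ∈ (End_k V)[[t]]. Let ∇: V[[t]] → V[[t]] be the k-linear operator ∇ = t·d/dt + A (the connection along the derivation t·d/dt), and let ∇' : V[[t]] → V[[t]] be the operator x ↦ t·∇(x) (the connection along t^2·d/dt). Then (∇')^p = t^p · (∇^p − ∇) as k-linear operators on V[[t]]. -/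
section

variable {k : Type*} [Field k] {V : Type*} [AddCommGroup V] [Module k V]

/-- Multiplication by `t` on `V[[t]]`, modelled as the shift operator on `ℕ → V`. -/
def shiftOp (k : Type*) [Field k] (V : Type*) [AddCommGroup V] [Module k V] :
    Module.End k (ℕ → V) where
  toFun x n := match n with | 0 => 0 | (m + 1) => x m
  map_add' x y := by funext n; cases n <;> simp
  map_smul' c x := by funext n; cases n <;> simp

/-- The operator `t·d/dt` on `V[[t]] = ℕ → V`, i.e. `∑ vₙ tⁿ ↦ ∑ n·vₙ tⁿ`. -/
def eulerOp (k : Type*) [Field k] (V : Type*) [AddCommGroup V] [Module k V] :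
    Module.End k (ℕ → V) where
  toFun x n := n • x n
  map_add' x y := by funext n; simp
  map_smul' c x := by
    funext n
    simp only [Pi.smul_apply, RingHom.id_apply]
    exact smul_comm _ _ _

/-- The action on `V[[t]] = ℕ → V` of a power series of endomorphisms
`A = ∑ Aᵢ tⁱ ∈ (End V)[[t]]`, by convolution. -/
def seriesOp (A : ℕ → Module.End k V) : Module.End k (ℕ → V) where
  toFun x n := ∑ i ∈ Finset.range (n + 1), A i (x (n - i))
  map_add' x y := by funext n; simp [Finset.sum_add_distrib]
  map_smul' c x := by funext n; simp [Finset.smul_sum]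

theorem asc_zmod (p : ℕ) [Fact p.Prime] :
    ascPochhammer (ZMod p) p = Polynomial.X ^ p - Polynomial.X := by
  have h1 : 1 < p := (Fact.out : p.Prime).one_lt
  have hd : (Polynomial.X ^ p - Polynomial.X : Polynomial (ZMod p)).degree = p := by
    rw [Polynomial.degree_eq_natDegree (FiniteField.X_pow_card_sub_X_ne_zero _ h1),
      FiniteField.X_pow_card_sub_X_natDegree_eq _ h1]
  have hm : (Polynomial.X ^ p - Polynomial.X : Polynomial (ZMod p)).Monic := by
    apply Polynomial.monic_X_pow_sub
    rw [Polynomial.degree_X]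
    exact_mod_cast h1
  have ha : (ascPochhammer (ZMod p) p).degree = p := by
    rw [Polynomial.degree_eq_natDegree (monic_ascPochhammer _ p).ne_zero,
      ascPochhammer_natDegree]
  refine Polynomial.eq_of_degree_sub_lt_of_eval_finset_eq Finset.univ ?_ ?_
  · have := Polynomial.degree_sub_lt (ha.trans hd.symm) (monic_ascPochhammer _ p).ne_zero
      ((monic_ascPochhammer (ZMod p) p).leadingCoeff.trans hm.leadingCoeff.symm)
    rw [ha] at this
    simpa [ZMod.card] using this
  · intro x _
    have hx : x = -(((-x).val : ℕ) : ZMod p) := by simp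
    have h2 : (ascPochhammer (ZMod p) p).eval x = 0 := by
      rw [hx]
      exact ascPochhammer_eval_neg_coe_nat_of_lt (ZMod.val_lt _)
    rw [h2]
    simp [ZMod.pow_card]

theorem asc_charP (K : Type*) [Field K] (p : ℕ) [CharP K p] (hp : 0 < p) :
    ascPochhammer K p = Polynomial.X ^ p - Polynomial.X := by
  haveI : Fact p.Prime := ⟨(CharP.char_is_prime_or_zero K p).resolve_right hp.ne'⟩
  rw [← ascPochhammer_map (ZMod.castHom (dvd_refl p) K), asc_zmod]
  simp

theorem comm_pow {R : Type*} [Ring R] (T N : R) (h : N * T = T * (N + 1)) (n : ℕ) :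
    N * T ^ n = T ^ n * (N + n) := by
  induction n with
  | zero => simp
  | succ n ih =>
    rw [pow_succ, ← mul_assoc, ih, mul_assoc, add_mul, h, Nat.cast_comm, ← mul_add, mul_assoc]
    push_cast
    congr 2
    abel

theorem pow_asc {K R : Type*} [Field K] [Ring R] [Algebra K R] (T N : R)
    (h : N * T = T * (N + 1)) (n : ℕ) :
    (T * N) ^ n = T ^ n * Polynomial.aeval N (ascPochhammer K n) := by
  induction n with
  | zero => simp
  | succ n ih =>
    rw [pow_succ', ih, ascPochhammer_succ_right, mul_comm (ascPochhammer K n), map_mul,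
      pow_succ', mul_assoc, ← mul_assoc N, comm_pow T N h]
    simp [mul_assoc]

theorem conn_comm (A : ℕ → Module.End k V) :
    (eulerOp k V + seriesOp A) * shiftOp k V =
      shiftOp k V * ((eulerOp k V + seriesOp A) + 1) := by
  ext1 x
  funext n
  cases n with
  | zero => simp [eulerOp, seriesOp, shiftOp]
  | succ n =>
    have : ∑ i ∈ Finset.range (n + 1), A i (shiftOp k V x (n + 1 - i)) =
        ∑ i ∈ Finset.range (n + 1), A i (x (n - i)) := by
      refine Finset.sum_congr rfl fun i hi => ?_
      rw [Nat.succ_sub (Nat.lt_succ_iff.mp (Finset.mem_range.mp hi))]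
      rfl
    change (n + 1) • x n + ∑ i ∈ Finset.range (n + 1 + 1), A i (shiftOp k V x (n + 1 - i)) =
      n • x n + ∑ i ∈ Finset.range (n + 1), A i (x (n - i)) + x n
    rw [Finset.sum_range_succ, this, Nat.sub_self, show shiftOp k V x 0 = 0 from rfl, map_zero,
      succ_nsmul]
    abel

/-- Lemma B.1, equation (B.5), of the paper. Let `k` be a field of
characteristic `p > 0`, `V` a finite-dimensional `k`-vector space, and
`A = ∑ Aᵢ tⁱ ∈ (End_k V)[[t]]`. Let `∇ = t·d/dt + A` be the connection along `t·d/dt` on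
`V[[t]]` (modelled as `ℕ → V`), and `∇' = t·∇` the connection along `t²·d/dt`. Then
`(∇')^p = t^p·(∇^p − ∇)`, expressing the Frobenius-linearity of the `p`-curvature. -/
theorem statement6 [FiniteDimensional k V] (p : ℕ) [CharP k p] (hp : 0 < p)
    (A : ℕ → Module.End k V) :
    ((shiftOp k V) * (eulerOp k V + seriesOp A)) ^ p =
      (shiftOp k V) ^ p *
        ((eulerOp k V + seriesOp A) ^ p - (eulerOp k V + seriesOp A)) := by
  rw [pow_asc (K := k) _ _ (conn_comm A), asc_charP k p hp]
  simp

end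
end

section
/- Let k be a field of odd characteristic p, and let V be a k-vector space equipped with a direct sum decomposition V = ⊕_{q∈ℤ} V_q with only finitely many nonzero summands. Let γ ∈ End_k(V) be the operator acting on V_q as multiplication by −q/2 (which makes sense since 2 is invertible in k). Let D: V[[t]] → V[[t]] be the k-linear operator D = t^2·d/dt + t·γ, i.e., D(∑_n v_n t^n) = ∑_n (n·v_n + γ(v_n))·t^{n+1}. Then D^p = 0. -/
/-- The operator `D = t²·d/dt + t·γ` on `V[[t]]` (modelled as `ℕ → V`):
`D(∑ vₙ tⁿ) = ∑ (n·vₙ + γ(vₙ))·t^{n+1}`. -/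
def twistOp (k : Type*) [Field k] (V : Type*) [AddCommGroup V] [Module k V]
    (γ : Module.End k V) : Module.End k (ℕ → V) where
  toFun x n := match n with | 0 => 0 | (m + 1) => m • x m + γ (x m)
  map_add' x y := by
    funext n
    cases n with
    | zero => simp
    | succ m => simp [smul_add]; abel
  map_smul' c x := by
    funext n
    cases n with
    | zero => simp
    | succ m =>
      simp only [Pi.smul_apply, RingHom.id_apply, map_smul, smul_add]
      rw [smul_comm]

theorem twistOp_pow_low (k : Type*) [Field k] (V : Type*) [AddCommGroup V] [Module k V]
    (γ : Module.End k V) (j : ℕ) : ∀ (x : ℕ → V) (m : ℕ), m < j → ((twistOp k V γ) ^ j) x m = 0 := by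
  induction j with
  | zero => intro x m h; omega
  | succ j ih =>
    intro x m h
    rw [pow_succ', Module.End.mul_apply]
    cases m with
    | zero => rfl
    | succ m =>
      change m • ((twistOp k V γ) ^ j) x m + γ (((twistOp k V γ) ^ j) x m) = 0
      rw [ih x m (by omega)]
      simp

theorem twistOp_pow_high (k : Type*) [Field k] (V : Type*) [AddCommGroup V] [Module k V]
    (γ : Module.End k V) (n : ℕ) (j : ℕ) :
    ∃ A : Module.End k V, (∀ x : ℕ → V, ((twistOp k V γ) ^ j) x (n + j) = A (x n)) ∧
      ∀ (c : k) (v : V), γ v = c • v →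
        A v = (∏ i ∈ Finset.range j, ((n : k) + (i : k) + c)) • v := by
  induction j with
  | zero => exact ⟨1, fun x => by simp, fun c v _ => by simp⟩
  | succ j ih =>
    obtain ⟨A, h1, h2⟩ := ih
    refine ⟨(n + j) • A + γ * A, fun x => ?_, fun c v hv => ?_⟩
    · rw [pow_succ', Module.End.mul_apply]
      change (n + j) • ((twistOp k V γ) ^ j) x (n + j)
        + γ (((twistOp k V γ) ^ j) x (n + j)) = _
      rw [h1]
      simp [add_smul]
    · rw [LinearMap.add_apply, LinearMap.smul_apply, Module.End.mul_apply, h2 c v hv, map_smul, hv,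
        Finset.prod_range_succ, ← Nat.cast_smul_eq_nsmul k, smul_smul, smul_smul, ← add_smul]
      congr 1
      push_cast
      ring

/-- (C.5)–(C.6) in the paper. Let `k` be a field of odd characteristic `p`,
and `V = ⊕_{q ∈ ℤ} V_q` a `k`-vector space graded by `ℤ` with only finitely many nonzero
summands. Let `γ` be the endomorphism acting on `V_q` by `−q/2`. Then the operator
`D = t²·d/dt + t·γ` on `V[[t]]` satisfies `D^p = 0`. -/
theorem statement7 {k : Type*} [Field k] (p : ℕ) [CharP k p] (hp0 : 0 < p) (hp2 : p ≠ 2)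
    {V : Type*} [AddCommGroup V] [Module k V]
    (Vq : ℤ → Submodule k V)
    (hint : DirectSum.IsInternal Vq)
    (hfin : {q : ℤ | Vq q ≠ ⊥}.Finite)
    (γ : Module.End k V)
    (hγ : ∀ (q : ℤ), ∀ v ∈ Vq q, γ v = (-((q : k) / 2)) • v) :
    (twistOp k V γ) ^ p = 0 := by
  have hprime : p.Prime := (CharP.char_is_prime_or_zero k p).resolve_right hp0.ne'
  obtain ⟨r, hr⟩ := hprime.odd_of_ne_two hp2
  have hpk : (p : k) = 0 := CharP.cast_eq_zero k p
  have h2r : (2 : k) * (r + 1) = 1 := by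
    rw [hr] at hpk
    push_cast at hpk
    linear_combination hpk
  have h2 : (2 : k) ≠ 0 := left_ne_zero_of_mul_eq_one h2r
  apply LinearMap.ext
  intro x
  funext m
  change ((twistOp k V γ) ^ p) x m = 0
  by_cases hm : m < p
  · exact twistOp_pow_low k V γ p x m hm
  obtain ⟨n, rfl⟩ := Nat.exists_eq_add_of_le' (not_lt.mp hm)
  obtain ⟨A, hA1, hA2⟩ := twistOp_pow_high k V γ n p
  rw [hA1]
  have key : (⊤ : Submodule k V) ≤ LinearMap.ker A := by
    rw [← hint.submodule_iSup_eq_top]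
    refine iSup_le fun q v hv => ?_
    rw [LinearMap.mem_ker, hA2 _ v (hγ q v hv)]
    have hz : (p : ℤ) ≠ 0 := by exact_mod_cast hp0.ne'
    have hnn := Int.emod_nonneg (q * (r + 1) - n) hz
    have hlt := Int.emod_lt_of_pos (q * (r + 1) - n) (by exact_mod_cast hp0 : (0 : ℤ) < p)
    obtain ⟨i, hi⟩ := Int.eq_ofNat_of_zero_le hnn
    have hdm := Int.emod_add_mul_ediv (q * (r + 1) - n) p
    rw [hi] at hdm hlt
    have hdk := congrArg (Int.cast : ℤ → k) hdm
    push_cast at hdk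
    rw [hpk] at hdk
    rw [Finset.prod_eq_zero (i := i) (Finset.mem_range.mpr (by omega)), zero_smul]
    field_simp
    linear_combination 2 * hdk + (q : k) * h2r
  exact LinearMap.mem_ker.mp (key (Submodule.mem_top (x := x n)))
end

section
/- Let R be an integral domain finitely generated as a ℤ-algebra whose fraction field has characteristic 0, and let M be a free module of rank n over the Laurent series ring R((t)) equipped with a connection ∇: M → M (an additive map with ∇(f·m) = (df/dt)·m + f·∇(m) for f ∈ R((t))). Then there exists a nonzero element h ∈ R such that the base-changed connection M ⊗_{R((t))} R[1/h]((t)) contains a cyclic vector: an element v such that v, ∇v, ∇^2 v, …, ∇^{n−1}v form a basis of M ⊗_{R((t))} R[1/h]((t)) over R[1/h]((t)). -/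
/-- Formal derivative `d/dt` on formal Laurent series. -/
noncomputable def lsDeriv {R : Type*} [CommRing R] (f : LaurentSeries R) : LaurentSeries R where
  coeff n := (n + 1) • f.coeff (n + 1)
  isPWO_support' := by
    refine Set.IsPWO.mono (f.isPWO_support.image_of_monotone
      (f := fun m : ℤ => m - 1) fun a b hab => sub_le_sub_right hab 1) ?_
    intro n hn
    have hne : f.coeff (n + 1) ≠ 0 := by
      intro h0
      apply hn
      simp [Function.mem_support, h0]
    exact ⟨n + 1, hne, by ring⟩

/-- The connection `∇ = d/dt + G` on the free module `Fin n → R((t))`, where `G` is the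
connection matrix. -/
noncomputable def connOp {R : Type*} [CommRing R] (n : ℕ)
    (G : Matrix (Fin n) (Fin n) (LaurentSeries R)) (x : Fin n → LaurentSeries R) :
    Fin n → LaurentSeries R :=
  fun i => lsDeriv (x i) + ∑ j, G i j * x j

/-- abstract connection -/
noncomputable def nab {A : Type*} [CommRing A] (D : A → A) (n : ℕ)
    (G : Matrix (Fin n) (Fin n) A) (x : Fin n → A) : Fin n → A :=
  fun i => D (x i) + ∑ j, G i j * x j

theorem nab_hom {A B : Type*} [CommRing A] [CommRing B] (φ : A →+* B) (D : A → A) (D' : B → B)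
    (hD : ∀ a, φ (D a) = D' (φ a)) (n : ℕ) (G : Matrix (Fin n) (Fin n) A) (k : ℕ)
    (v : Fin n → A) (i : Fin n) :
    φ ((nab D n G)^[k] v i) = (nab D' n (G.map φ))^[k] (fun i => φ (v i)) i := by
  induction k generalizing v i with
  | zero => rfl
  | succ k ih =>
    rw [Function.iterate_succ_apply, Function.iterate_succ_apply, ih]
    have h : (fun i => φ (nab D n G v i)) = nab D' n (G.map φ) fun i => φ (v i) := by
      funext i
      simp [nab, hD]
    rw [h]

theorem nab_add {A : Type*} [CommRing A] (D : Derivation ℤ A A) (n : ℕ)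
    (G : Matrix (Fin n) (Fin n) A) (x y : Fin n → A) :
    nab D n G (x + y) = nab D n G x + nab D n G y := by
  ext i
  simp [nab, mul_add, Finset.sum_add_distrib]
  ring

theorem nab_smul {A : Type*} [CommRing A] (D : Derivation ℤ A A) (n : ℕ)
    (G : Matrix (Fin n) (Fin n) A) (f : A) (x : Fin n → A) :
    nab D n G (f • x) = D f • x + f • nab D n G x := by
  ext i
  have : ∑ j, G i j * (f * x j) = f * ∑ j, G i j * x j := by
    rw [Finset.mul_sum]; exact Finset.sum_congr rfl fun j _ => by ring
  simp [nab, this]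
  ring

theorem nab_iter_add {A : Type*} [CommRing A] (D : Derivation ℤ A A) (n : ℕ)
    (G : Matrix (Fin n) (Fin n) A) (k : ℕ) (x y : Fin n → A) :
    (nab D n G)^[k] (x + y) = (nab D n G)^[k] x + (nab D n G)^[k] y := by
  induction k generalizing x y with
  | zero => rfl
  | succ k ih => simp only [Function.iterate_succ_apply, nab_add, ih]

theorem nab_iter_natsmul {A : Type*} [CommRing A] (D : Derivation ℤ A A) (n : ℕ)
    (G : Matrix (Fin n) (Fin n) A) (k : ℕ) (c : ℕ) (x : Fin n → A) :
    (nab D n G)^[k] ((c : A) • x) = (c : A) • (nab D n G)^[k] x := by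
  induction k generalizing x with
  | zero => rfl
  | succ k ih => simp [Function.iterate_succ_apply, nab_smul, ih]

theorem nab_iter_pow {A : Type*} [CommRing A] (D : Derivation ℤ A A) (n : ℕ)
    (G : Matrix (Fin n) (Fin n) A) (s : A) (hs : D s = 1) (i : ℕ) : ∀ k : ℕ,
    ∃ d : ℕ, d ≠ 0 ∧ ∀ w : Fin n → A, ∃ u : Fin n → A,
      (nab D n G)^[i] (s ^ (k + i) • w) = (d : A) • s ^ k • w + s ^ (k + 1) • u := by
  induction i with
  | zero => exact fun k => ⟨1, one_ne_zero, fun w => ⟨0, by simp⟩⟩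
  | succ i ih =>
    intro k
    obtain ⟨d, hd, H⟩ := ih (k + 1)
    refine ⟨d * (k + 1), by positivity, fun w => ?_⟩
    obtain ⟨u, hu⟩ := H w
    refine ⟨(d : A) • nab D n G w + ((k + 2 : ℕ) : A) • u + s • nab D n G u, ?_⟩
    rw [show k + (i + 1) = k + 1 + i by ring, Function.iterate_succ_apply', hu]
    ext j
    simp only [nab_add, nab_smul, Derivation.leibniz_pow, hs, Derivation.map_natCast]
    simp
    ring

/-- derivations over the integers, with the generic algebra structure -/
abbrev ZDer (A : Type*) [CommRing A] := Derivation ℤ A A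

/-- build a derivation -/
def mkZDer {A : Type*} [CommRing A] (D : A → A) (hadd : ∀ f g, D (f + g) = D f + D g)
    (hmul : ∀ f g, D (f * g) = f * D g + g * D f) : ZDer A :=
  Derivation.mk' (AddMonoidHom.toIntLinearMap (AddMonoidHom.mk' D hadd)) hmul

theorem mkZDer_apply {A : Type*} [CommRing A] (D : A → A) (hadd : ∀ f g, D (f + g) = D f + D g)
    (hmul : ∀ f g, D (f * g) = f * D g + g * D f) (a : A) : mkZDer D hadd hmul a = D a := rfl

open Polynomial in
theorem exists_cyclic_poly {A : Type*} [CommRing A] (D : ZDer A[X]) (hX : D X = 1)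
    (n : ℕ) (G : Matrix (Fin n) (Fin n) A[X]) (m : ℕ) :
    ∃ c : ℕ, c ≠ 0 ∧ ∃ v : Fin n → A[X], ∀ i < m, ∀ j : Fin n,
      ((nab D n G)^[i] v j).eval 0 = if (j : ℕ) = i then (c : A) else 0 := by
  induction m with
  | zero => exact ⟨1, one_ne_zero, 0, by simp⟩
  | succ m ih =>
    obtain ⟨c, hc, v, hv⟩ := ih
    obtain ⟨d, hd, H⟩ := nab_iter_pow D n G X hX m 0
    refine ⟨d * c, by positivity, (d : A[X]) • v + (X : A[X]) ^ (0 + m) • (fun j : Fin n =>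
      C ((if (j : ℕ) = m then (c : A) else 0) - ((nab D n G)^[m] v j).eval 0)), ?_⟩
    intro i hi j
    rw [nab_iter_add, nab_iter_natsmul]
    rcases Nat.lt_succ_iff_lt_or_eq.mp hi with h | rfl
    · obtain ⟨k, rfl⟩ := Nat.exists_eq_add_of_lt h
      obtain ⟨d', hd', H'⟩ := nab_iter_pow D n G X hX i (k + 1)
      rw [show 0 + (i + k + 1) = k + 1 + i by ring]
      obtain ⟨u, hu⟩ := H' (fun j : Fin n => C ((if (j : ℕ) = (i + k + 1) then (c : A) else 0)
        - ((nab D n G)^[i + k + 1] v j).eval 0))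
      rw [hu]
      simp [hv i h]
    · obtain ⟨u, hu⟩ := H (fun j : Fin n => C ((if (j : ℕ) = i then (c : A) else 0)
        - ((nab D n G)^[i] v j).eval 0))
      rw [hu]
      simp
      split_ifs <;> ring

open Polynomial in
theorem exists_cyclic_det {A : Type*} [CommRing A] [IsDomain A] [CharZero A]
    (D : Derivation ℤ A A) (s : A) (hs : D s = 1) (n : ℕ) (G : Matrix (Fin n) (Fin n) A) :
    ∃ v : Fin n → A, (Matrix.of fun i j : Fin n => (nab D n G)^[(j : ℕ)] v i).det ≠ 0 := by
  let : Differential A := ⟨D⟩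
  have : DifferentialAlgebra A A := ⟨fun a => rfl⟩
  let E : ZDer A[X] := mkZDer (Differential.implicitDeriv (1 : A[X])) (map_add _)
    (fun f g => by simp [Derivation.leibniz])
  have hE : ∀ a, E a = Differential.implicitDeriv (1 : A[X]) a := fun a => mkZDer_apply _ _ _ a
  obtain ⟨c, hc, v, hv⟩ := exists_cyclic_poly E (by rw [hE]; simp)
    n (G.map C) n
  set P : A[X] := (Matrix.of fun i j : Fin n =>
    (nab E n (G.map C))^[(j : ℕ)] v i).det with hP
  have hP0 : P ≠ 0 := by
    intro h0
    have h1 : P.eval 0 = (c : A) ^ n := by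
      have : (evalRingHom (0 : A)) P = (c : A) ^ n := by
        rw [hP, RingHom.map_det]
        have : (evalRingHom (0 : A)).mapMatrix (Matrix.of fun i j : Fin n =>
            (nab E n (G.map C))^[(j : ℕ)] v i)
            = Matrix.diagonal fun _ => (c : A) := by
          ext i j
          simp [hv j j.2 i, Matrix.diagonal_apply, Fin.ext_iff]
        rw [this]
        simp
      simpa using this
    rw [h0] at h1
    simp at h1
    exact hc (by exact_mod_cast (IsReduced.eq_zero (c : A) ⟨n, h1.symm⟩))
  obtain ⟨z, hz⟩ : ∃ z : ℕ, P.eval (s + z) ≠ 0 := by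
    by_contra! hcon
    apply hP0
    apply Polynomial.eq_zero_of_infinite_isRoot
    refine (Set.infinite_range_of_injective (f := fun z : ℕ => s + (z : A)) ?_).mono ?_
    · intro a b hab
      simpa using hab
    · rintro _ ⟨z, rfl⟩
      exact hcon z
  refine ⟨fun i => (v i).eval (s + z), ?_⟩
  have key : evalRingHom (s + (z : A)) P = (Matrix.of fun i j : Fin n =>
      (nab D n G)^[(j : ℕ)] (fun i => (v i).eval (s + z)) i).det := by
    rw [hP, RingHom.map_det]
    congr 1
    ext i j
    have := nab_hom (evalRingHom (s + (z : A))) E D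
      (fun a => by
        rw [hE]
        have h := Differential.deriv_aeval_eq_implicitDeriv (A := A) (R := A) (s + (z : A)) 1
          (by
            show D (s + z) = _
            simp [hs]) a
        simp only [coe_aeval_eq_eval] at h
        exact h.symm) n (G.map C) j v i
    have hG : (G.map C).map (evalRingHom (s + (z : A))) = G := by
      ext; simp
    rw [hG] at this
    simpa using this
  rw [← key]
  simpa using hz

theorem lsDeriv_mul {R : Type*} [CommRing R] (f g : LaurentSeries R) :
    lsDeriv (f * g) = f * lsDeriv g + g * lsDeriv f := by
  let θ : LaurentSeries R → LaurentSeries R := fun f =>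
    ⟨fun m => m • f.coeff m, f.isPWO_support.mono fun m hm h => hm (by simp [h])⟩
  have hsub : ∀ f, (θ f).support ⊆ f.support := fun f m hm h => hm (by simp [θ, h])
  have hθ : ∀ f, lsDeriv f = HahnSeries.single (-1) 1 * θ f := by
    intro f
    ext m
    rw [HahnSeries.coeff_single_mul]
    simp [lsDeriv, θ]
  have hmul : θ (f * g) = f * θ g + g * θ f := by
    ext m
    rw [mul_comm g, HahnSeries.coeff_add, HahnSeries.coeff_mul_left' f.isPWO_support (hsub f),
      HahnSeries.coeff_mul_right' g.isPWO_support (hsub g), ← Finset.sum_add_distrib]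
    show m • (f * g).coeff m = _
    rw [HahnSeries.coeff_mul, Finset.smul_sum]
    refine Finset.sum_congr rfl fun ij hij => ?_
    have : ij.1 + ij.2 = m := by simpa using (Finset.mem_antidiagonal.mp hij).2.2
    rw [← this]
    simp [θ]
    ring
  rw [hθ, hθ, hθ, hmul]
  ring

theorem lsDeriv_add {R : Type*} [CommRing R] (f g : LaurentSeries R) :
    lsDeriv (f + g) = lsDeriv f + lsDeriv g := by
  ext m
  rw [HahnSeries.coeff_add]
  simp [lsDeriv, mul_add]

/-- `d/dt` as a derivation -/
noncomputable def lsDer (R : Type*) [CommRing R] : ZDer (LaurentSeries R) :=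
  mkZDer lsDeriv lsDeriv_add lsDeriv_mul

theorem lsDer_apply {R : Type*} [CommRing R] (f : LaurentSeries R) : lsDer R f = lsDeriv f :=
  mkZDer_apply _ _ _ _

/-- coefficientwise map as ring hom -/
noncomputable def lsMap {R S : Type*} [CommRing R] [CommRing S] (φ : R →+* S) :
    LaurentSeries R →+* LaurentSeries S where
  toFun f := f.map φ
  map_one' := by
    ext m
    simp only [HahnSeries.map_coeff, HahnSeries.coeff_one]
    split_ifs <;> simp
  map_zero' := by ext; simp
  map_add' f g := by ext; simp
  map_mul' f g := HahnSeries.map_mul (φ : R →ₙ+* S)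

/-- Lemma A.2 of the paper. Let `R` be an integral domain, finitely generated
as a `ℤ`-algebra, with fraction field of characteristic `0`, and let `M = Fin n → R((t))` be a
free `R((t))`-module of rank `n` with connection `∇ = d/dt + G`. Then there is a nonzero
`h ∈ R` such that the base change of `(M, ∇)` to `R[1/h]((t))` contains a cyclic vector `v`,
i.e. `v, ∇v, …, ∇^{n-1}v` form a basis (equivalently the matrix with these columns is
invertible). -/
theorem statement9 {R : Type*} [CommRing R] [IsDomain R] [Algebra.FiniteType ℤ R]
    [CharZero (FractionRing R)]
    (n : ℕ) (G : Matrix (Fin n) (Fin n) (LaurentSeries R)) :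
    ∃ h : R, h ≠ 0 ∧
      ∃ v : Fin n → LaurentSeries (Localization.Away h),
        IsUnit (Matrix.of fun i j : Fin n =>
          ((connOp n (G.map fun g =>
            g.map (algebraMap R (Localization.Away h))))^[(j : ℕ)] v) i) := by
  have : CharZero R := by
    refine ⟨fun a b hab => ?_⟩
    have := congrArg (algebraMap R (FractionRing R)) hab
    simpa using this
  have : CharZero (LaurentSeries R) :=
    charZero_of_injective_ringHom (f := (HahnSeries.C : R →+* LaurentSeries R))
      HahnSeries.C_injective
  have hs : lsDer R (HahnSeries.single 1 1) = 1 := by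
    rw [lsDer_apply]
    ext m
    simp only [lsDeriv, HahnSeries.coeff_single, HahnSeries.coeff_one]
    by_cases hm : m = 0 <;> simp [hm]
  obtain ⟨v, hv⟩ := exists_cyclic_det (lsDer R) _ hs n G
  set d := (Matrix.of fun i j : Fin n => (nab (lsDer R) n G)^[(j : ℕ)] v i).det with hd
  have hh : d.leadingCoeff ≠ 0 := HahnSeries.leadingCoeff_ne_zero.mpr hv
  refine ⟨d.leadingCoeff, hh, ?_⟩
  generalize hhd : d.leadingCoeff = h at hh
  let φ := algebraMap R (Localization.Away h)
  have hinj : Function.Injective φ :=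
    IsLocalization.injective _ (powers_le_nonZeroDivisors_of_noZeroDivisors hh)
  have : IsDomain (Localization.Away h) :=
    IsLocalization.isDomain_localization (powers_le_nonZeroDivisors_of_noZeroDivisors hh)
  refine ⟨fun i => lsMap φ (v i), ?_⟩
  rw [Matrix.isUnit_iff_isUnit_det]
  have key : lsMap φ d = (Matrix.of fun i j : Fin n =>
      ((connOp n (G.map fun g => g.map φ))^[(j : ℕ)] (fun i => lsMap φ (v i))) i).det := by
    rw [hd, RingHom.map_det]
    congr 1
    ext1 i j
    exact nab_hom (lsMap φ) (lsDer R) lsDeriv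
      (fun f => by
        ext m
        rw [lsDer_apply]
        show φ ((m + 1) • f.coeff (m + 1)) = (m + 1) • φ (f.coeff (m + 1))
        exact map_zsmul φ _ _) n G j v i
  rw [← key]
  have hu : IsUnit (φ h) := IsLocalization.Away.algebraMap_isUnit h
  have hne : lsMap φ d ≠ 0 := by
    intro h0
    have := congrArg (fun f => HahnSeries.coeff f d.order) h0
    have h2 : φ (d.coeff d.order) = 0 := this
    rw [← HahnSeries.leadingCoeff_eq, hhd] at h2
    exact hu.ne_zero h2
  have hord : (lsMap φ d).order = d.order := by
    apply le_antisymm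
    · apply HahnSeries.order_le_of_coeff_ne_zero
      show φ (d.coeff d.order) ≠ 0
      rw [← HahnSeries.leadingCoeff_eq, hhd]
      exact hu.ne_zero
    · apply HahnSeries.order_le_of_coeff_ne_zero
      intro h0
      apply HahnSeries.leadingCoeff_ne_zero.mpr hne
      rw [HahnSeries.leadingCoeff_eq]
      show φ (d.coeff _) = 0
      rw [h0, map_zero]
  rw [HahnSeries.isUnit_iff, HahnSeries.leadingCoeff_eq, hord]
  show IsUnit (φ (d.coeff d.order))
  rw [← HahnSeries.leadingCoeff_eq, hhd]
  exact hu
end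

section
/- Let R be an integral domain finitely generated as a ℤ-algebra whose fraction field K has characteristic 0. Let M be a free module of rank n over R((t)) with a connection ∇ (an additive map M → M with ∇(f·m) = (df/dt)·m + f·∇(m)) that contains a cyclic vector v ∈ M, i.e., v, ∇v, …, ∇^{n−1}v is an R((t))-basis of M. Suppose that M ⊗_{R((t))} K((t)) does not have a regular singularity at t = 0, i.e., there is no K((t))-basis of M ⊗_{R((t))} K((t)) in which the matrix of ∇_{t·d/dt} := t·∇ has all entries in K[[t]]. Then for every positive integer a divisible by n!, the connection obtained by base change along the ring map R((t)) → R((s)), t ↦ s^a (with the pulled-back connection satisfying ∇'_{s·d/ds}(m ⊗ 1) = a·(∇_{t·d/dt} m) ⊗ 1 and the Leibniz rule over R((s))) admits an R((s))-basis f in which ∇'_{s·d/ds} f = s^{−N}(A + sB)·f for some integer N ≥ 1, some non-nilpotent matrix A ∈ M_n(R), and some matrix B ∈ M_n(R[[s]]). -/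
/-- Substitution `t ↦ t^a` on formal Laurent series. -/
noncomputable def lsExpand {R : Type*} [CommRing R] (a : ℕ) (f : LaurentSeries R) :
    LaurentSeries R where
  coeff m := if _ : (a : ℤ) ∣ m then f.coeff (m / a) else 0
  isPWO_support' := by
    refine Set.IsPWO.mono (f.isPWO_support.image_of_monotone
      (f := fun m : ℤ => (a : ℤ) * m)
      (fun x y hxy => mul_le_mul_of_nonneg_left hxy (by positivity))) ?_
    intro m hm
    rw [Function.mem_support] at hm
    by_cases h : (a : ℤ) ∣ m
    · exact ⟨m / a, fun h0 => hm (by simp [h, h0]), Int.mul_ediv_cancel' h⟩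
    · exact absurd (by simp [h]) hm

/-- Entrywise formal derivative of a matrix of Laurent series. -/
noncomputable def matDeriv {R : Type*} [CommRing R] {n : ℕ}
    (P : Matrix (Fin n) (Fin n) (LaurentSeries R)) : Matrix (Fin n) (Fin n) (LaurentSeries R) :=
  Matrix.of fun i j => lsDeriv (P i j)

section FTL

open HahnSeries

/-- The Euler operator `t d/dt`. -/
noncomputable def ftlTh {R : Type*} [CommRing R] (f : LaurentSeries R) : LaurentSeries R :=
  HahnSeries.single (1 : ℤ) (1 : R) * lsDeriv f

lemma ftlTh_coeff {R : Type*} [CommRing R] (f : LaurentSeries R) (k : ℤ) :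
    (ftlTh f).coeff k = k • f.coeff k := by
  unfold ftlTh
  rw [HahnSeries.coeff_single_mul]
  simp [lsDeriv]

lemma ftlTh_add {R : Type*} [CommRing R] (f g : LaurentSeries R) :
    ftlTh (f + g) = ftlTh f + ftlTh g := by
  ext k
  simp [ftlTh_coeff]

lemma ftlTh_mul {R : Type*} [CommRing R] (f g : LaurentSeries R) :
    ftlTh (f * g) = ftlTh f * g + f * ftlTh g := by
  ext k
  have hs : ∀ h : LaurentSeries R, (ftlTh h).support ⊆ h.support := by
    intro h m hm h0
    apply hm
    simp only [ftlTh_coeff]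
    simp [h0]
  rw [ftlTh_coeff, HahnSeries.coeff_add, HahnSeries.coeff_mul_left' f.isPWO_support (hs f),
    HahnSeries.coeff_mul_right' g.isPWO_support (hs g), HahnSeries.coeff_mul,
    ← Finset.sum_add_distrib, Finset.smul_sum]
  refine Finset.sum_congr rfl fun ij hij => ?_
  have h := (Finset.mem_antidiagonal.mp hij).2.2
  rw [ftlTh_coeff, ftlTh_coeff, ← h]
  simp only [zsmul_eq_mul, Int.cast_add]
  ring

/-- Expansion as a ring homomorphism. -/
noncomputable def ftlExp {R : Type*} [CommRing R] (a : ℕ) (ha : 0 < a) :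
    LaurentSeries R →+* LaurentSeries R :=
  HahnSeries.embDomainRingHom (AddMonoidHom.mulLeft (a : ℤ))
    (fun x y h => by
      have : (a : ℤ) ≠ 0 := by exact_mod_cast ha.ne'
      exact mul_left_cancel₀ this h)
    (fun x y => by
      have : (0 : ℤ) < a := by exact_mod_cast ha
      exact mul_le_mul_iff_right₀ this)

lemma ftlExp_coeff_mul {R : Type*} [CommRing R] (a : ℕ) (ha : 0 < a) (f : LaurentSeries R)
    (k : ℤ) : (ftlExp a ha f).coeff (a * k) = f.coeff k := by
  unfold ftlExp
  exact HahnSeries.embDomain_coeff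

lemma ftlExp_coeff_not {R : Type*} [CommRing R] (a : ℕ) (ha : 0 < a) (f : LaurentSeries R)
    (k : ℤ) (hk : ¬ (a : ℤ) ∣ k) : (ftlExp a ha f).coeff k = 0 := by
  unfold ftlExp
  apply HahnSeries.embDomain_of_notMem_range
  rintro ⟨x, hx⟩
  exact hk ⟨x, hx.symm⟩

lemma ftlExp_eq {R : Type*} [CommRing R] (a : ℕ) (ha : 0 < a) (f : LaurentSeries R) :
    lsExpand a f = ftlExp a ha f := by
  ext k
  have h0 : (a : ℤ) ≠ 0 := by exact_mod_cast ha.ne'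
  by_cases hk : (a : ℤ) ∣ k
  · obtain ⟨m, rfl⟩ := hk
    rw [ftlExp_coeff_mul]
    simp [lsExpand, Int.mul_ediv_cancel_left _ h0]
  · rw [ftlExp_coeff_not a ha f k hk]
    simp [lsExpand, hk]

lemma ftlTh_exp {R : Type*} [CommRing R] (a : ℕ) (ha : 0 < a) (f : LaurentSeries R) :
    ftlTh (ftlExp a ha f) = a • ftlExp a ha (ftlTh f) := by
  ext k
  rw [ftlTh_coeff, HahnSeries.coeff_nsmul]
  by_cases hk : (a : ℤ) ∣ k
  · obtain ⟨m, rfl⟩ := hk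
    rw [Pi.smul_apply, ftlExp_coeff_mul, ftlExp_coeff_mul, ftlTh_coeff]
    simp [mul_assoc]
  · rw [Pi.smul_apply, ftlExp_coeff_not a ha f k hk, ftlExp_coeff_not a ha _ k hk]
    simp

lemma ftlTh_single {R : Type*} [CommRing R] (m : ℤ) :
    ftlTh (HahnSeries.single m (1 : R)) = m • HahnSeries.single m (1 : R) := by
  ext k
  rw [ftlTh_coeff]
  rw [HahnSeries.coeff_smul]
  by_cases h : k = m
  · subst h; simp
  · simp [HahnSeries.coeff_single_of_ne h]

lemma ftl_ofPS_neg {R : Type*} [CommRing R] (F : PowerSeries R) (k : ℤ) (hk : k < 0) :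
    (HahnSeries.ofPowerSeries ℤ R F).coeff k = 0 := by
  rw [HahnSeries.ofPowerSeries_apply]
  apply HahnSeries.embDomain_of_notMem_range
  rintro ⟨x, hx⟩
  have : (x : ℤ) = k := hx
  omega

/-- Laurent series without polar part are power series. -/
lemma ftl_exists_ps {R : Type*} [CommRing R] (f : LaurentSeries R)
    (hf : ∀ k < 0, f.coeff k = 0) : ∃ F : PowerSeries R, HahnSeries.ofPowerSeries ℤ R F = f := by
  refine ⟨PowerSeries.mk fun k => f.coeff k, ?_⟩
  ext k
  rcases lt_or_ge k 0 with hk | hk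
  · rw [hf k hk, ftl_ofPS_neg _ _ hk]
  · lift k to ℕ using hk
    rw [HahnSeries.ofPowerSeries_apply_coeff, PowerSeries.coeff_mk]

lemma ftl_split {R : Type*} [CommRing R] (f : LaurentSeries R) (N : ℕ)
    (hf : ∀ k < -(N : ℤ), f.coeff k = 0) :
    ∃ F : PowerSeries R, f = HahnSeries.single (-(N : ℤ)) (1 : R) *
      (HahnSeries.C (f.coeff (-(N : ℤ))) +
        HahnSeries.single (1 : ℤ) (1 : R) * HahnSeries.ofPowerSeries ℤ R F) := by
  obtain ⟨F, hF⟩ := ftl_exists_ps (HahnSeries.single ((N : ℤ) - 1) (1 : R) *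
    (f - HahnSeries.single (-(N : ℤ)) (f.coeff (-(N : ℤ))))) (by
      intro k hk
      rw [HahnSeries.coeff_single_mul, one_mul, HahnSeries.coeff_sub]
      by_cases h : k - ((N : ℤ) - 1) = -(N : ℤ)
      · rw [h]; simp
      · rw [HahnSeries.coeff_single_of_ne h, hf _ (by omega), sub_zero])
  refine ⟨F, ?_⟩
  rw [hF, mul_add, ← mul_assoc, ← mul_assoc, HahnSeries.single_mul_single,
    HahnSeries.single_mul_single, HahnSeries.C_apply, HahnSeries.single_mul_single]
  have : -(N : ℤ) + 1 + (N - 1) = 0 := by ring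
  rw [this]
  simp

/-- The Euler operator of a connection. -/
noncomputable def ftlOp {R : Type*} [CommRing R] {n : ℕ}
    (G : Matrix (Fin n) (Fin n) (LaurentSeries R)) (x : Fin n → LaurentSeries R) :
    Fin n → LaurentSeries R :=
  HahnSeries.single (1 : ℤ) (1 : R) • connOp n G x

lemma ftlOp_apply {R : Type*} [CommRing R] {n : ℕ}
    (G : Matrix (Fin n) (Fin n) (LaurentSeries R)) (x : Fin n → LaurentSeries R) (i : Fin n) :
    ftlOp G x i = ftlTh (x i) + ∑ j, (HahnSeries.single (1 : ℤ) (1 : R) * G i j) * x j := by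
  simp only [ftlOp, connOp, Pi.smul_apply, smul_eq_mul, ftlTh, mul_add, Finset.mul_sum, mul_assoc]

lemma ftlOp_add {R : Type*} [CommRing R] {n : ℕ}
    (G : Matrix (Fin n) (Fin n) (LaurentSeries R)) (x y : Fin n → LaurentSeries R) :
    ftlOp G (x + y) = ftlOp G x + ftlOp G y := by
  ext1 i
  simp only [ftlOp_apply, Pi.add_apply, ftlTh_add, mul_add, Finset.sum_add_distrib]
  ring

lemma ftlOp_smul {R : Type*} [CommRing R] {n : ℕ}
    (G : Matrix (Fin n) (Fin n) (LaurentSeries R)) (f : LaurentSeries R)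
    (x : Fin n → LaurentSeries R) :
    ftlOp G (f • x) = ftlTh f • x + f • ftlOp G x := by
  ext1 i
  simp only [ftlOp_apply, Pi.add_apply, Pi.smul_apply, smul_eq_mul, ftlTh_mul, mul_add,
    Finset.mul_sum]
  rw [add_assoc]
  congr 2
  exact Finset.sum_congr rfl fun j _ => by ring

lemma connOp_eq {R : Type*} [CommRing R] {n : ℕ}
    (G : Matrix (Fin n) (Fin n) (LaurentSeries R)) (x : Fin n → LaurentSeries R) :
    connOp n G x = HahnSeries.single (-1 : ℤ) (1 : R) • ftlOp G x := by
  rw [ftlOp, smul_smul, HahnSeries.single_mul_single]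
  simp

lemma ftlOp_zero {R : Type*} [CommRing R] {n : ℕ}
    (G : Matrix (Fin n) (Fin n) (LaurentSeries R)) : ftlOp G 0 = 0 := by
  have := ftlOp_add G 0 0
  simpa using this

lemma ftl_span {R : Type*} [CommRing R] {n : ℕ}
    (G : Matrix (Fin n) (Fin n) (LaurentSeries R)) (v : Fin n → LaurentSeries R) (k : ℕ) :
    (connOp n G)^[k] v ∈ Submodule.span (LaurentSeries R)
      ((fun i => (ftlOp G)^[i] v) '' Set.Iic k) := by
  induction k with
  | zero => exact Submodule.subset_span ⟨0, by simp, rfl⟩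
  | succ k ih =>
    rw [Function.iterate_succ_apply', connOp_eq]
    apply Submodule.smul_mem
    generalize (connOp n G)^[k] v = w at ih
    have hmono : Submodule.span (LaurentSeries R) ((fun i => (ftlOp G)^[i] v) '' Set.Iic k) ≤
        Submodule.span (LaurentSeries R) ((fun i => (ftlOp G)^[i] v) '' Set.Iic (k + 1)) :=
      Submodule.span_mono (Set.image_mono (Set.Iic_subset_Iic.mpr (Nat.le_succ k)))
    induction ih using Submodule.span_induction with
    | mem x hx =>
      obtain ⟨i, hi, rfl⟩ := hx
      refine Submodule.subset_span ⟨i + 1, ?_, ?_⟩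
      · simpa using hi
      · simp only [Function.iterate_succ_apply']
    | zero => rw [ftlOp_zero]; exact Submodule.zero_mem _
    | add x y _ _ hx hy => rw [ftlOp_add]; exact Submodule.add_mem _ hx hy
    | smul f x hx hx' =>
      rw [ftlOp_smul]
      exact Submodule.add_mem _ (Submodule.smul_mem _ _ (hmono hx)) (Submodule.smul_mem _ _ hx')

/-- The Euler cyclic basis. -/
noncomputable def ftlE {R : Type*} [CommRing R] {n : ℕ}
    (G : Matrix (Fin n) (Fin n) (LaurentSeries R)) (v : Fin n → LaurentSeries R) :
    Matrix (Fin n) (Fin n) (LaurentSeries R) :=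
  Matrix.of fun i j => ((ftlOp G)^[(j : ℕ)] v) i

lemma ftlE_isUnit {R : Type*} [CommRing R] {n : ℕ}
    (G : Matrix (Fin n) (Fin n) (LaurentSeries R)) (v : Fin n → LaurentSeries R)
    (hcyc : IsUnit (Matrix.of fun i j : Fin n => ((connOp n G)^[(j : ℕ)] v) i)) :
    IsUnit (ftlE G v) := by
  have h : ∀ j : Fin n, ∃ c : Fin n → LaurentSeries R,
      (ftlE G v).mulVec c = (connOp n G)^[(j : ℕ)] v := by
    intro j
    have h1 : (connOp n G)^[(j : ℕ)] v ∈ LinearMap.range (ftlE G v).mulVecLin := by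
      rw [Matrix.range_mulVecLin]
      refine Submodule.span_mono ?_ (ftl_span G v j)
      rintro _ ⟨i, hi, rfl⟩
      have hi' : i ≤ (j : ℕ) := hi
      exact ⟨⟨i, by omega⟩, rfl⟩
    obtain ⟨c, hc⟩ := h1
    exact ⟨c, by simpa using hc⟩
  choose c hc using h
  have hmul : (ftlE G v) * (Matrix.of fun i j => c j i) =
      Matrix.of fun i j : Fin n => ((connOp n G)^[(j : ℕ)] v) i := by
    ext1 i j
    have := congrFun (hc j) i
    simpa [Matrix.mul_apply, Matrix.mulVec, dotProduct] using this
  rw [← hmul, Matrix.isUnit_iff_isUnit_det, Matrix.det_mul] at hcyc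
  rw [Matrix.isUnit_iff_isUnit_det]
  exact isUnit_of_mul_isUnit_left hcyc

/-- Companion matrix. -/
def ftlComp {L : Type*} [Zero L] [One L] {n : ℕ} (b : Fin n → L) : Matrix (Fin n) (Fin n) L :=
  Matrix.of fun i j =>
    if (j : ℕ) + 1 < n then (if (i : ℕ) = j + 1 then 1 else 0) else b i

lemma ftl_key {R : Type*} [CommRing R] {n : ℕ}
    (G : Matrix (Fin n) (Fin n) (LaurentSeries R)) (v b : Fin n → LaurentSeries R)
    (hb : (ftlE G v).mulVec b = (ftlOp G)^[n] v) (i j : Fin n) :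
    ftlTh (ftlE G v i j) + ∑ k, (HahnSeries.single (1 : ℤ) (1 : R) * G i k) * ftlE G v k j =
      ∑ k, ftlE G v i k * ftlComp b k j := by
  have h1 : ftlTh (ftlE G v i j) +
      ∑ k, (HahnSeries.single (1 : ℤ) (1 : R) * G i k) * ftlE G v k j =
      ((ftlOp G)^[(j : ℕ) + 1] v) i := by
    rw [Function.iterate_succ_apply', ftlOp_apply]
    rfl
  rw [h1]
  by_cases hj : (j : ℕ) + 1 < n
  · rw [Finset.sum_eq_single (⟨(j : ℕ) + 1, hj⟩ : Fin n)]
    · simp [ftlComp, hj, ftlE]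
    · intro k _ hk
      have : (k : ℕ) ≠ j + 1 := fun h => hk (Fin.ext h)
      simp [ftlComp, hj, this]
    · simp
  · have hn : (j : ℕ) + 1 = n := by omega
    rw [hn, ← hb]
    simp [ftlComp, hj, Matrix.mulVec, dotProduct]

lemma ftlComp_pow_col {L : Type*} [CommRing L] {n : ℕ} (b : Fin n → L) (i0 : Fin n) :
    ∀ k : ℕ, ∀ i : Fin n, ((ftlComp b ^ k) i ⟨0, i0.pos⟩ = if k < n then
      (if (i : ℕ) = k then 1 else 0) else if k = n then b i else
      (ftlComp b ^ k) i ⟨0, i0.pos⟩) := by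
  intro k
  induction k with
  | zero =>
    intro i
    simp [i0.pos, Matrix.one_apply, Fin.ext_iff]
  | succ k ih =>
    intro i
    by_cases hk : k < n
    · have h : (ftlComp b ^ (k + 1)) i ⟨0, i0.pos⟩ = ftlComp b i ⟨k, hk⟩ := by
        rw [pow_succ', Matrix.mul_apply, Finset.sum_eq_single (⟨k, hk⟩ : Fin n)]
        · rw [ih]; simp [hk]
        · intro j _ hj
          have : (j : ℕ) ≠ k := fun h => hj (Fin.ext h)
          rw [ih]; simp [hk, this]
        · simp
      rw [h]
      by_cases hk' : k + 1 < n
      · simp [ftlComp, hk']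
      · have : k + 1 = n := by omega
        simp [ftlComp, this]
    · rw [if_neg (by omega), if_neg (by omega)]

lemma ftl_not_nilp {R : Type*} [CommRing R] [IsDomain R] {n : ℕ} (a : R) (ha : a ≠ 0)
    (b : Fin n → R) (i0 : Fin n) (hb : b i0 ≠ 0) : ¬ IsNilpotent (a • ftlComp b) := by
  intro h
  have h1 := (Matrix.isNilpotent_charpoly_sub_pow_of_isNilpotent h).eq_zero
  have h2 := Matrix.aeval_self_charpoly (a • ftlComp b)
  rw [sub_eq_zero.mp h1] at h2
  simp only [map_pow, Polynomial.aeval_X, Fintype.card_fin, smul_pow] at h2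
  have h3 := congrFun (congrFun h2 i0) ⟨0, i0.pos⟩
  rw [Matrix.smul_apply, ftlComp_pow_col b i0] at h3
  simp [ha, hb] at h3

lemma ftl_exists_map (R : Type*) [CommRing R] (K : Type*) [CommRing K] [Algebra R K] :
    ∃ ψ : LaurentSeries R →+* LaurentSeries K,
      ∀ g : LaurentSeries R, ψ g = g.map (algebraMap R K) := by
  refine ⟨{ toFun := fun g => g.map (algebraMap R K)
            map_one' := ?_
            map_mul' := ?_
            map_zero' := ?_
            map_add' := ?_ }, fun g => rfl⟩
  · exact HahnSeries.map_one (algebraMap R K).toMonoidWithZeroHom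
  · intro x y
    exact HahnSeries.map_mul ((algebraMap R K : R →+* K) : R →ₙ+* K)
  · ext k; simp
  · intro x y
    ext k; simp

lemma ftl_comp_coeff {R : Type*} [CommRing R] {n : ℕ} (b : Fin n → LaurentSeries R)
    (hb : ∀ i, ∀ k < 0, (b i).coeff k = 0) (i j : Fin n) (k : ℤ) (hk : k < 0) :
    (ftlComp b i j).coeff k = 0 := by
  simp only [ftlComp, Matrix.of_apply]
  split_ifs
  · rw [HahnSeries.coeff_one, if_neg hk.ne]
  · simp
  · exact hb i k hk

lemma ftl_regular {R : Type*} [CommRing R] (K : Type*) [CommRing K] [Algebra R K] {n : ℕ}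
    (G : Matrix (Fin n) (Fin n) (LaurentSeries R)) (v b : Fin n → LaurentSeries R)
    (hE : IsUnit (ftlE G v))
    (hb : (ftlE G v).mulVec b = (ftlOp G)^[n] v)
    (hreg : ∀ i, ∀ k < 0, (b i).coeff k = 0) :
    ∃ P : Matrix (Fin n) (Fin n) (LaurentSeries K), IsUnit P ∧
      ∃ B : Matrix (Fin n) (Fin n) (PowerSeries K),
        (HahnSeries.single (1 : ℤ) (1 : K)) •
            (matDeriv P + (G.map fun g => g.map (algebraMap R K)) * P) =
          P * (B.map (HahnSeries.ofPowerSeries ℤ K)) := by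
  obtain ⟨ψ, hψ⟩ := ftl_exists_map R K
  have hB : ∀ i j, ∃ F : PowerSeries K,
      HahnSeries.ofPowerSeries ℤ K F = ψ (ftlComp b i j) := by
    intro i j
    apply ftl_exists_ps
    intro k hk
    rw [hψ, HahnSeries.map_coeff, ftl_comp_coeff b hreg i j k hk, map_zero]
  choose B hB using hB
  refine ⟨(ftlE G v).map ψ, ?_, Matrix.of B, ?_⟩
  · have := hE.map (RingHom.mapMatrix ψ)
    simpa using this
  · have hT : ψ (HahnSeries.single (1 : ℤ) (1 : R)) = HahnSeries.single (1 : ℤ) (1 : K) := by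
      rw [hψ]
      ext k
      by_cases h : k = 1
      · subst h; simp
      · simp [HahnSeries.coeff_single_of_ne h]
    have hth : ∀ f, ψ (ftlTh f) = ftlTh (ψ f) := by
      intro f
      rw [hψ, hψ]
      ext k
      simp [ftlTh_coeff]
    ext1 i j
    have h := congrArg ψ (ftl_key G v b hb i j)
    simp only [map_add, map_sum, map_mul, hth, hT, ← hB] at h
    simp only [Matrix.smul_apply, Matrix.add_apply, Matrix.mul_apply, Matrix.map_apply,
      Matrix.of_apply, matDeriv, smul_eq_mul, mul_add, Finset.mul_sum, ← hψ]
    rw [← h, ftlTh]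
    congr 1
    exact Finset.sum_congr rfl fun k _ => by ring

/-- The entries of the connection matrix in the new basis. -/
noncomputable def ftlM {R : Type*} [CommRing R] {n : ℕ} (a : ℕ) (ha : 0 < a) (N : ℕ)
    (b : Fin n → LaurentSeries R) : Matrix (Fin n) (Fin n) (LaurentSeries R) :=
  Matrix.of fun i j =>
    a • (HahnSeries.single (((j : ℕ) : ℤ) * N - ((i : ℕ) : ℤ) * N) (1 : R) *
      ftlExp a ha (ftlComp b i j)) + if i = j then HahnSeries.C (((j : ℕ) * N : ℕ) : R) else 0

lemma ftlM_coeff {R : Type*} [CommRing R] {n : ℕ} (a : ℕ) (ha : 0 < a) (N : ℕ) (hN : 1 ≤ N)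
    (b : Fin n → LaurentSeries R) (i j : Fin n) (k : ℤ) (hk : k < 0) :
    (ftlM a ha N b i j).coeff k =
      a • (if (j : ℕ) + 1 < n then (if (i : ℕ) = j + 1 then (if k = -(N : ℤ) then 1 else 0) else 0)
        else (ftlExp a ha (b i)).coeff (k - ((n : ℤ) - 1 - (i : ℕ)) * N)) := by
  have h0 : (if i = j then HahnSeries.C (((j : ℕ) * N : ℕ) : R) else 0 : LaurentSeries R).coeff k
      = 0 := by
    split_ifs
    · rw [HahnSeries.C_apply, HahnSeries.coeff_single_of_ne hk.ne]
    · simp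
  simp only [ftlM, Matrix.of_apply]
  rw [HahnSeries.coeff_add, h0, add_zero, HahnSeries.coeff_nsmul, Pi.smul_apply,
    HahnSeries.coeff_single_mul, one_mul]
  congr 1
  simp only [ftlComp, Matrix.of_apply]
  by_cases hj : (j : ℕ) + 1 < n
  · rw [if_pos hj, if_pos hj]
    by_cases hi : (i : ℕ) = j + 1
    · rw [if_pos hi, if_pos hi, map_one, HahnSeries.coeff_one, hi]
      have : k - (((j : ℕ) : ℤ) * N - (((j : ℕ) + 1 : ℕ) : ℤ) * N) = 0 ↔ k = -(N : ℤ) := by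
        push_cast
        constructor <;> intro h <;> linarith
      simp only [this]
    · rw [if_neg hi, if_neg hi]; simp
  · rw [if_neg hj, if_neg hj]
    have : ((j : ℕ) : ℤ) = n - 1 := by omega
    rw [this]
    congr 1
    ring

lemma ftl_gauge {R : Type*} [CommRing R] {n : ℕ} (a : ℕ) (ha : 0 < a) (N : ℕ)
    (G : Matrix (Fin n) (Fin n) (LaurentSeries R)) (v b : Fin n → LaurentSeries R)
    (hb : (ftlE G v).mulVec b = (ftlOp G)^[n] v) (P : Matrix (Fin n) (Fin n) (LaurentSeries R))
    (hP : ∀ i j, P i j = ftlExp a ha (ftlE G v i j) *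
      HahnSeries.single (((j : ℕ) : ℤ) * N) (1 : R)) :
    (HahnSeries.single (1 : ℤ) (1 : R)) • matDeriv P +
      a • ((Matrix.of fun i j =>
        lsExpand a ((HahnSeries.single (1 : ℤ) (1 : R)) * G i j)) * P) = P * ftlM a ha N b := by
  ext1 i j
  have h := congrArg (ftlExp a ha) (ftl_key G v b hb i j)
  simp only [map_add, map_sum] at h
  have hl : ((HahnSeries.single (1 : ℤ) (1 : R)) • matDeriv P +
      a • ((Matrix.of fun i j =>
        lsExpand a ((HahnSeries.single (1 : ℤ) (1 : R)) * G i j)) * P)) i j =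
      ftlTh (P i j) + a • ∑ k, ftlExp a ha ((HahnSeries.single (1 : ℤ) (1 : R)) * G i k) *
        P k j := by
    simp only [Matrix.add_apply, Matrix.smul_apply, Matrix.mul_apply, Matrix.of_apply,
      ftlExp_eq a ha, matDeriv, smul_eq_mul, ftlTh]
  rw [hl, Matrix.mul_apply]
  have hr : ∀ k, P i k * ftlM a ha N b k j =
      a • (ftlExp a ha (ftlE G v i k * ftlComp b k j) *
        HahnSeries.single (((j : ℕ) : ℤ) * N) (1 : R)) +
      if k = j then P i j * HahnSeries.C (((j : ℕ) * N : ℕ) : R) else 0 := by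
    intro k
    simp only [ftlM, Matrix.of_apply, mul_add, mul_ite, mul_zero]
    congr 1
    · have hs : HahnSeries.single (((j : ℕ) : ℤ) * N) (1 : R) =
          HahnSeries.single (((k : ℕ) : ℤ) * N) (1 : R) *
          HahnSeries.single (((j : ℕ) : ℤ) * N - ((k : ℕ) : ℤ) * N) (1 : R) := by
        rw [HahnSeries.single_mul_single]
        simp
      rw [hP, map_mul, hs, mul_smul_comm]
      congr 1
      ring
    · by_cases hk : k = j
      · subst hk; rfl
      · simp [hk]
  simp only [hr, Finset.sum_add_distrib, Finset.sum_ite_eq', Finset.mem_univ, if_true]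
  rw [← Finset.smul_sum, ← Finset.sum_mul, ← h]
  simp only [hP, map_mul, ftlTh_mul, ftlTh_exp, ftlTh_single]
  have hC : (((j : ℕ) : ℤ) * N) • HahnSeries.single (((j : ℕ) : ℤ) * N) (1 : R) =
      HahnSeries.single (((j : ℕ) : ℤ) * N) (1 : R) * HahnSeries.C (((j : ℕ) * N : ℕ) : R) := by
    rw [HahnSeries.C_apply, HahnSeries.single_zero_natCast, zsmul_eq_mul]
    push_cast
    ring
  rw [hC]
  simp only [add_mul, Finset.sum_mul, smul_add, smul_mul_assoc, mul_assoc]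
  abel

end FTL

/-- Theorem A.3 of the paper; the Fuchs–Turrittin–Lutz theorem over a global
affine variety. Let `R` be an integral domain, finitely generated as a `ℤ`-algebra, with
fraction field `K` of characteristic `0`, and `M = Fin n → R((t))` a free `R((t))`-module of
rank `n` with connection `∇ = d/dt + G` possessing a cyclic vector `v`. Suppose that over
`K((t))` the connection does not have a regular singularity at `t = 0`, i.e. there is no basis
in which the matrix of `∇_{t·d/dt}` has entries in `K[[t]]`. Then for every positive multiple
`a` of `n!`, the base change along `t ↦ s^a` (whose operator `∇'_{s·d/ds}` is
`x ↦ s·(dx/ds) + a·(s^a·G(s^a))·x`) admits a basis (encoded by an invertible matrix `P`) in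
which its matrix is `s^{-N}·(A + s·B)` for some `N ≥ 1`, some non-nilpotent `A ∈ Mₙ(R)` and
some `B ∈ Mₙ(R[[s]])`. -/
theorem statement10 {R : Type*} [CommRing R] [IsDomain R] [Algebra.FiniteType ℤ R]
    [CharZero (FractionRing R)]
    (n : ℕ) (G : Matrix (Fin n) (Fin n) (LaurentSeries R))
    (v : Fin n → LaurentSeries R)
    (hcyc : IsUnit (Matrix.of fun i j : Fin n => ((connOp n G)^[(j : ℕ)] v) i))
    (hirr : ¬ ∃ P : Matrix (Fin n) (Fin n) (LaurentSeries (FractionRing R)),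
      IsUnit P ∧
      ∃ B : Matrix (Fin n) (Fin n) (PowerSeries (FractionRing R)),
        (HahnSeries.single (1 : ℤ) (1 : FractionRing R)) •
            (matDeriv P + (G.map fun g => g.map (algebraMap R (FractionRing R))) * P) =
          P * (B.map (HahnSeries.ofPowerSeries ℤ (FractionRing R)))) :
    ∀ a : ℕ, 0 < a → n.factorial ∣ a →
      ∃ P : Matrix (Fin n) (Fin n) (LaurentSeries R),
        IsUnit P ∧
        ∃ N : ℕ, 1 ≤ N ∧
        ∃ A : Matrix (Fin n) (Fin n) R, ¬ IsNilpotent A ∧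
        ∃ B : Matrix (Fin n) (Fin n) (PowerSeries R),
          (HahnSeries.single (1 : ℤ) (1 : R)) • matDeriv P +
              a • ((Matrix.of fun i j =>
                lsExpand a ((HahnSeries.single (1 : ℤ) (1 : R)) * G i j)) * P) =
            P * ((HahnSeries.single (-(N : ℤ)) (1 : R)) •
              (A.map (fun x : R => ((HahnSeries.C x) : LaurentSeries R)) +
                (HahnSeries.single (1 : ℤ) (1 : R)) •
                  B.map (HahnSeries.ofPowerSeries ℤ R))) := by
  intro a ha hdvd
  have hE := ftlE_isUnit G v hcyc
  obtain ⟨b, hb⟩ : ∃ b, (ftlE G v).mulVec b = (ftlOp G)^[n] v := by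
    refine ⟨(ftlE G v)⁻¹.mulVec ((ftlOp G)^[n] v), ?_⟩
    rw [Matrix.mulVec_mulVec, Matrix.mul_nonsing_inv _ ((Matrix.isUnit_iff_isUnit_det _).mp hE),
      Matrix.one_mulVec]
  obtain ⟨i1, hi1⟩ : ∃ i, (b i).order < 0 := by
    by_contra hcon
    push Not at hcon
    exact hirr (ftl_regular (FractionRing R) G v b hE hb fun i k hk =>
      HahnSeries.coeff_eq_zero_of_lt_order (lt_of_lt_of_le hk (hcon i)))
  have hq : ∀ i : Fin n, ∃ q : ℕ, a = (n - (i : ℕ)) * q := by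
    intro i
    exact (Nat.dvd_factorial (by omega) (by omega)).trans hdvd
  choose q hq using hq
  have hqpos : ∀ i, 0 < q i := by
    intro i
    rcases Nat.eq_zero_or_pos (q i) with h | h
    · have := hq i
      rw [h] at this
      omega
    · exact h
  have hqz : ∀ i : Fin n, (a : ℤ) = ((n : ℤ) - (i : ℕ)) * q i := by
    intro i
    have := hq i
    zify [i.is_lt.le] at this
    exact this
  obtain ⟨i0, -, hmax⟩ := Finset.exists_max_image Finset.univ
    (fun i : Fin n => -(b i).order * (q i : ℤ)) ⟨i1, Finset.mem_univ _⟩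
  have hNpos : 0 < -(b i0).order * (q i0 : ℤ) := by
    refine lt_of_lt_of_le ?_ (hmax i1 (Finset.mem_univ _))
    have : (0 : ℤ) < q i1 := by exact_mod_cast hqpos i1
    exact mul_pos (by omega) this
  obtain ⟨N, hN⟩ : ∃ N : ℕ, (N : ℤ) = -(b i0).order * (q i0 : ℤ) :=
    ⟨(-(b i0).order * (q i0 : ℤ)).toNat, Int.toNat_of_nonneg hNpos.le⟩
  have hN1 : 1 ≤ N := by omega
  -- coefficient vanishing
  have hvan : ∀ i : Fin n, ∀ k : ℤ, k < -((n : ℤ) - (i : ℕ)) * N →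
      (ftlExp a ha (b i)).coeff k = 0 := by
    intro i k hk
    by_cases hd : (a : ℤ) ∣ k
    · obtain ⟨m, rfl⟩ := hd
      rw [ftlExp_coeff_mul]
      apply HahnSeries.coeff_eq_zero_of_lt_order
      have h1 := hmax i (Finset.mem_univ _)
      simp only [← hN] at h1
      have hni : (0 : ℤ) < (n : ℤ) - (i : ℕ) := by omega
      have h2 := mul_le_mul_of_nonneg_left h1 hni.le
      have h3 : (a : ℤ) * m < a * (b i).order := by
        calc (a : ℤ) * m < -((n : ℤ) - (i : ℕ)) * N := hk
          _ ≤ ((n : ℤ) - (i : ℕ)) * q i * (b i).order := by linarith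
          _ = a * (b i).order := by rw [← hqz i]
      exact lt_of_mul_lt_mul_left h3 (by positivity)
    · exact ftlExp_coeff_not a ha _ k hd
  have hne : (ftlExp a ha (b i0)).coeff (-((n : ℤ) - (i0 : ℕ)) * N) ≠ 0 := by
    have : -((n : ℤ) - (i0 : ℕ)) * N = a * (b i0).order := by
      rw [hN, hqz i0]; ring
    rw [this, ftlExp_coeff_mul]
    intro h0
    rw [HahnSeries.coeff_order_eq_zero] at h0
    rw [h0] at hNpos
    simp at hNpos
  have haR : (a : R) ≠ 0 := by
    intro h
    have := congrArg (algebraMap R (FractionRing R)) h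
    rw [map_natCast, map_zero] at this
    exact ha.ne' (by exact_mod_cast this)
  let M := ftlM a ha N b
  have hMlow : ∀ i j, ∀ k < -(N : ℤ), (M i j).coeff k = 0 := by
    intro i j k hk
    rw [ftlM_coeff a ha N hN1 b i j k (by omega), if_neg hk.ne,
      hvan i _ (by linarith)]
    simp
  have hM0 : Matrix.of (fun i j => (M i j).coeff (-(N : ℤ))) =
      (a : R) • ftlComp fun i => (ftlExp a ha (b i)).coeff (-((n : ℤ) - (i : ℕ)) * N) := by
    ext i j
    rw [Matrix.of_apply, ftlM_coeff a ha N hN1 b i j _ (by omega), if_pos rfl, Matrix.smul_apply,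
      ← Nat.cast_smul_eq_nsmul R]
    have : -(N : ℤ) - ((n : ℤ) - 1 - (i : ℕ)) * N = -((n : ℤ) - (i : ℕ)) * N := by ring
    rw [this]
    rfl
  have hspl := fun i j => ftl_split (M i j) N (hMlow i j)
  choose B hB using hspl
  refine ⟨(ftlE G v).map (ftlExp a ha) *
    Matrix.diagonal (fun j : Fin n => HahnSeries.single (((j : ℕ) : ℤ) * N) (1 : R)), ?_, N, hN1,
    Matrix.of (fun i j => (M i j).coeff (-(N : ℤ))), ?_, Matrix.of B, ?_⟩
  · refine IsUnit.mul ?_ ?_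
    · have := hE.map (RingHom.mapMatrix (ftlExp a ha))
      simpa using this
    · rw [Matrix.isUnit_diagonal, Pi.isUnit_iff]
      intro j
      refine IsUnit.of_mul_eq_one (HahnSeries.single (-(((j : ℕ) : ℤ) * N)) (1 : R)) ?_
      rw [HahnSeries.single_mul_single]
      simp
  · rw [hM0]
    exact ftl_not_nilp _ haR _ i0 hne
  · rw [ftl_gauge a ha N G v b hb _ fun i j => by simp [Matrix.mul_diagonal]]
    congr 1
    ext1 i j
    exact hB i j
end

section
/- Let R₀ be an integral domain finitely generated as a ℤ-algebra whose fraction field K has characteristic 0, let V be a finite rank free R₀-module, and let A ∈ End_{R₀}(V). Then there exist an integral domain R finitely generated as a ℤ-algebra, together with an injective ring homomorphism R₀ → R whose induced extension of fraction fields is algebraic, such that over R: (1) the characteristic polynomial of A ⊗ R splits completely as ∏_{i=1}^m (x − λ_i)^{k_i} with pairwise distinct λ_i ∈ R; (2) V ⊗_{R₀} R decomposes as the direct sum ⊕_{i=1}^m ker((A ⊗ R) − λ_i·id)^{k_i}, and each summand is a finite rank free R-module; and (3) λ_i − λ_j is a unit of R for all i ≠ j. -/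
universe u

open Polynomial Module in
theorem jordan_isInternal {R W : Type*} [CommRing R] [IsDomain R] [AddCommGroup W] [Module R W]
    [Module.Free R W] [Module.Finite R W] (B : Module.End R W) {m : ℕ} (lam : Fin m → R)
    (k : Fin m → ℕ) (hinj : Function.Injective lam)
    (hp : B.charpoly = ∏ i : Fin m, (X - C (lam i)) ^ k i)
    (hu : ∀ i j : Fin m, i ≠ j → IsUnit (lam i - lam j)) :
    DirectSum.IsInternal (fun i : Fin m =>
      LinearMap.ker ((B - lam i • (1 : Module.End R W)) ^ k i)) := by
  rw [DirectSum.isInternal_submodule_iff_iSupIndep_and_iSup_eq_top]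
  constructor
  · have h := (B.independent_maxGenEigenspace).comp hinj
    refine h.mono fun i => ?_
    rw [← Module.End.genEigenspace_nat]
    exact B.genEigenspace_le_maximal _ _
  · have hae : ∀ i, aeval B ((X - C (lam i)) ^ k i) = (B - lam i • (1 : Module.End R W)) ^ k i := by
      intro i
      simp [Algebra.algebraMap_eq_smul_one]
    have hch := B.aeval_self_charpoly
    rw [hp] at hch
    rw [eq_top_iff]
    intro x _
    rcases isEmpty_or_nonempty (Fin m) with he | he
    · have : x = 0 := by simpa using congrArg (fun T : Module.End R W => T x) hch
      rw [this]; exact zero_mem _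
    · obtain ⟨μ, hμ⟩ := (exists_sum_eq_one_iff_pairwise_coprime'
        (s := fun i : Fin m => (X - C (lam i)) ^ k i)).2 (fun i j hij =>
          (isCoprime_X_sub_C_of_isUnit_sub (hu i j hij)).pow)
      have hx : x = ∑ i, aeval B (μ i * ∏ j ∈ {i}ᶜ, (X - C (lam j)) ^ k j) x := by
        rw [← LinearMap.sum_apply, ← map_sum, hμ]; simp
      rw [hx]
      refine Submodule.sum_mem _ fun i _ => Submodule.mem_iSup_of_mem i ?_
      rw [LinearMap.mem_ker, ← hae, ← Module.End.mul_apply, ← map_mul]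
      have : (X - C (lam i)) ^ k i * (μ i * ∏ j ∈ {i}ᶜ, (X - C (lam j)) ^ k j)
          = μ i * ∏ j, (X - C (lam j)) ^ k j := by
        rw [← Finset.prod_mul_prod_compl {i} (fun j => (X - C (lam j)) ^ k j), Finset.prod_singleton]; ring
      rw [this, map_mul, hch]; simp

open Module in
theorem jordan_free {R W : Type*} [CommRing R] [AddCommGroup W] [Module R W] {m : ℕ}
    (N : Fin m → Submodule R W) (hN : iSupIndep N) {κ : Fin m → Type*} [∀ i, Finite (κ i)]
    (c : Basis (Σ i, κ i) R W) (hc : ∀ s, c s ∈ N s.1) (i : Fin m) :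
    Module.Free R (N i) ∧ Module.Finite R (N i) := by
  let S : Fin m → Submodule R W := fun i => Submodule.span R (Set.range fun j => c ⟨i, j⟩)
  have hS : ∀ i, S i ≤ N i := fun i => by
    rw [Submodule.span_le]; rintro _ ⟨j, rfl⟩; exact hc ⟨i, j⟩
  have htop : ⊤ ≤ S i ⊔ ⨆ j, ⨆ (_ : j ≠ i), N j := by
    rw [← c.span_eq, Submodule.span_le]
    rintro _ ⟨⟨j, a⟩, rfl⟩
    by_cases h : j = i
    · subst h
      exact Submodule.mem_sup_left (Submodule.subset_span ⟨a, rfl⟩)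
    · exact Submodule.mem_sup_right (Submodule.mem_iSup_of_mem j
        (Submodule.mem_iSup_of_mem h (hc ⟨j, a⟩)))
  have hE : N i = S i := by
    have h1 := sup_inf_assoc_of_le (⨆ j, ⨆ (_ : j ≠ i), N j) (hS i)
    rw [top_le_iff.1 htop, top_inf_eq, inf_comm, (hN i).eq_bot, sup_bot_eq] at h1
    exact h1
  rw [hE]
  have li : LinearIndependent R (fun j => c ⟨i, j⟩) :=
    c.linearIndependent.comp (fun j : κ i => (⟨i, j⟩ : Σ i, κ i)) sigma_mk_injective
  exact ⟨Module.Free.of_basis (Basis.span li), Module.Finite.of_basis (Basis.span li)⟩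

open Module in
theorem jordan_descend {R L W U : Type*} [CommRing R] [CommRing L] [Algebra R L]
    (hRL : Function.Injective (algebraMap R L))
    [AddCommGroup W] [Module R W] [AddCommGroup U] [Module L U] [Module R U] [IsScalarTower R L U]
    (g : W →ₗ[R] U) {ι σ : Type*} [Fintype ι] [Fintype σ] (b : Basis ι R W) (d : Basis ι L U)
    (hg : ∀ i, g (b i) = d i) (c : Basis σ L U)
    (h1 : ∀ s i, ∃ r : R, algebraMap R L r = d.repr (c s) i)
    (h2 : ∀ i s, ∃ r : R, algebraMap R L r = c.repr (d i) s) :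
    Function.Injective g ∧ ∃ c' : Basis σ R W, ∀ s, g (c' s) = c s := by
  have hsm : ∀ (r : R) (x : U), r • x = algebraMap R L r • x :=
    fun r x => (algebraMap_smul L r x).symm
  have hinj : Function.Injective g := by
    rw [injective_iff_map_eq_zero]
    intro x hx
    rw [← b.sum_repr x, map_sum] at hx
    simp only [map_smul, hg, hsm] at hx
    have := Fintype.linearIndependent_iff.1 d.linearIndependent _ hx
    apply b.repr.injective
    ext i
    apply hRL
    simpa using this i
  refine ⟨hinj, ?_⟩
  choose P hP using h1
  choose Q hQ using h2
  have hv : ∀ s, g (∑ i, P s i • b i) = c s := fun s => by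
    rw [map_sum]
    simp only [map_smul, hg, hsm, hP]
    exact d.sum_repr _
  refine ⟨Basis.mk (v := fun s => ∑ i, P s i • b i) ?_ ?_, fun s => by rw [Basis.mk_apply, hv]⟩
  · rw [Fintype.linearIndependent_iff]
    intro a ha s
    have := congrArg g ha
    rw [map_sum, map_zero] at this
    simp only [map_smul, hv, hsm] at this
    have := Fintype.linearIndependent_iff.1 c.linearIndependent _ this s
    apply hRL
    simpa using this
  · rw [← b.span_eq, Submodule.span_le]
    rintro _ ⟨i, rfl⟩
    have : b i = ∑ s, Q i s • ∑ i, P s i • b i := by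
      apply hinj
      rw [map_sum]
      simp only [map_smul, hv]
      simp only [hg, hsm, hQ]
      exact (c.sum_repr _).symm
    rw [this]
    exact Submodule.sum_mem _ fun s _ => Submodule.smul_mem _ _ (Submodule.subset_span ⟨s, rfl⟩)

open Polynomial in
theorem jordan_split {L : Type*} [Field L] [IsAlgClosed L] (p : L[X]) (hp : p.Monic) :
    ∃ (m : ℕ) (lam : Fin m → L) (k : Fin m → ℕ), Function.Injective lam ∧
      p = ∏ i : Fin m, (X - C (lam i)) ^ k i := by
  classical
  let e := p.roots.toFinset.equivFin.symm
  refine ⟨_, fun i => (e i : L), fun i => p.rootMultiplicity (e i : L),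
    Subtype.val_injective.comp e.injective, ?_⟩
  conv_lhs => rw [(IsAlgClosed.splits p).eq_prod_roots_of_monic hp,
    prod_multiset_root_eq_finset_root, ← Finset.prod_coe_sort]
  exact (Equiv.prod_comp e (fun a => (X - C (a : L)) ^ p.rootMultiplicity (a : L))).symm

open Module in
theorem jordan_basis {L U : Type*} [Field L] [AddCommGroup U] [Module L U] [Module.Finite L U]
    {m : ℕ} (N : Fin m → Submodule L U) (h : DirectSum.IsInternal N) :
    ∃ (n : Fin m → ℕ) (c : Basis (Σ i, Fin (n i)) L U), ∀ s, c s ∈ N s.1 :=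
  ⟨_, h.collectedBasis (fun i => Module.finBasis L (N i)), h.collectedBasis_mem _⟩

theorem jordan_finiteType (R₀ R : Type*) [CommRing R₀] [CommRing R] [Algebra R₀ R]
    (h : Algebra.FiniteType ℤ R₀) (h' : Algebra.FiniteType R₀ R) : Algebra.FiniteType ℤ R :=
  Algebra.FiniteType.trans h h'

open Polynomial Module TensorProduct in
theorem jordan_main {R₀ L : Type u} [CommRing R₀] [IsDomain R₀] [Algebra.FiniteType ℤ R₀]
    [Field L] [IsAlgClosed L] [Algebra R₀ L] [halg : Algebra.IsAlgebraic R₀ L]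
    (hR₀L : Function.Injective (algebraMap R₀ L))
    (V : Type u) [AddCommGroup V] [Module R₀ V] [Module.Free R₀ V] [Module.Finite R₀ V]
    (A : Module.End R₀ V) :
    ∃ (R : Type u) (_ : CommRing R) (_ : IsDomain R) (_ : Algebra R₀ R),
      Function.Injective (algebraMap R₀ R) ∧
      Algebra.FiniteType ℤ R ∧ Algebra.IsAlgebraic R₀ R ∧
       ∃ (m : ℕ) (lam : Fin m → R) (k : Fin m → ℕ),
         Function.Injective lam ∧
         LinearMap.charpoly (LinearMap.baseChange R A) =
           ∏ i : Fin m, (Polynomial.X - Polynomial.C (lam i)) ^ k i ∧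
         DirectSum.IsInternal (fun i : Fin m =>
           LinearMap.ker ((LinearMap.baseChange R A -
             lam i • (1 : Module.End R (TensorProduct R₀ R V))) ^ k i)) ∧
         (∀ i : Fin m, Module.Free R
           (LinearMap.ker ((LinearMap.baseChange R A -
             lam i • (1 : Module.End R (TensorProduct R₀ R V))) ^ k i))) ∧
         (∀ i : Fin m, Module.Finite R
           (LinearMap.ker ((LinearMap.baseChange R A -
             lam i • (1 : Module.End R (TensorProduct R₀ R V))) ^ k i))) ∧
         (∀ i j : Fin m, i ≠ j → IsUnit (lam i - lam j)) := by
  classical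
  obtain ⟨m, lam, k, hlam, hch⟩ := jordan_split (A.baseChange L).charpoly
    (LinearMap.charpoly_monic _)
  have hint := jordan_isInternal (A.baseChange L) lam k hlam hch
    (fun i j hij => (sub_ne_zero.2 (hlam.ne hij)).isUnit)
  obtain ⟨n, c, hc⟩ := jordan_basis _ hint
  let b := Module.Free.chooseBasis R₀ V
  let d := b.baseChange L
  let S : Set L := Set.range lam ∪ Set.range (fun p : Fin m × Fin m => (lam p.1 - lam p.2)⁻¹) ∪
    (Set.range (fun p : _ × _ => d.repr (c p.1) p.2) ∪
      Set.range (fun p : _ × _ => c.repr (d p.1) p.2))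
  have hSf : S.Finite := ((Set.finite_range _).union (Set.finite_range _)).union
    ((Set.finite_range _).union (Set.finite_range _))
  let R := Algebra.adjoin R₀ S
  have hS : ∀ x ∈ S, ∃ r : R, algebraMap R L r = x :=
    fun x hx => ⟨⟨x, Algebra.subset_adjoin hx⟩, rfl⟩
  have hRL : Function.Injective (algebraMap R L) := Subtype.val_injective
  have hft : Algebra.FiniteType R₀ R := Algebra.FiniteType.adjoin_of_finite hSf
  have hlr : ∀ i, ∃ r : R, algebraMap R L r = lam i :=
    fun i => hS _ (Or.inl (Or.inl ⟨i, rfl⟩))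
  choose lr hlr using hlr
  have hlrinj : Function.Injective lr := fun i j h => hlam (by rw [← hlr, ← hlr, h])
  have hu : ∀ i j : Fin m, i ≠ j → IsUnit (lr i - lr j) := fun i j hij => by
    obtain ⟨r, hr⟩ := hS _ (Or.inl (Or.inr ⟨(i, j), rfl⟩))
    refine IsUnit.of_mul_eq_one r (hRL ?_)
    rw [map_mul, map_sub, hlr, hlr, hr, map_one]
    exact mul_inv_cancel₀ (sub_ne_zero.2 (hlam.ne hij))
  have hchR : (A.baseChange R).charpoly = ∏ i : Fin m, (X - C (lr i)) ^ k i := by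
    apply Polynomial.map_injective _ hRL
    rw [LinearMap.charpoly_baseChange] at hch ⊢
    rw [Polynomial.map_map, ← IsScalarTower.algebraMap_eq, hch, Polynomial.map_prod]
    simp [hlr]
  have hintR := jordan_isInternal (A.baseChange R) lr k hlrinj hchR hu
  let g : R ⊗[R₀] V →ₗ[R] L ⊗[R₀] V :=
    TensorProduct.AlgebraTensorModule.map (Algebra.linearMap R L) LinearMap.id
  have hgt : ∀ (r : R) (v : V), g (r ⊗ₜ v) = (algebraMap R L r) ⊗ₜ v := fun r v => rfl
  obtain ⟨hginj, c', hc'⟩ := jordan_descend hRL g (b.baseChange R) d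
    (fun i => by simp only [d, Basis.baseChange_apply, hgt, map_one]) c
    (fun s i => hS _ (Or.inr (Or.inl ⟨(s, i), rfl⟩)))
    (fun i s => hS _ (Or.inr (Or.inr ⟨(i, s), rfl⟩)))
  have hgA : ∀ x, g (A.baseChange R x) = A.baseChange L (g x) := fun x => by
    induction x with
    | zero => simp
    | add x y hx hy => simp only [map_add, hx, hy]
    | tmul r v => simp only [LinearMap.baseChange_tmul, hgt]
  have hgN : ∀ i n x, g (((A.baseChange R - lr i • (1 : Module.End R (R ⊗[R₀] V))) ^ n) x) =
      ((A.baseChange L - lam i • (1 : Module.End L (L ⊗[R₀] V))) ^ n) (g x) := by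
    intro i n
    induction n with
    | zero => intro x; simp
    | succ n ih =>
      intro x
      rw [pow_succ, pow_succ, Module.End.mul_apply, Module.End.mul_apply, ih]
      congr 1
      simp only [LinearMap.sub_apply, LinearMap.smul_apply, Module.End.one_apply, map_sub, hgA,
        map_smul, ← hlr, algebraMap_smul]
  have hfree := jordan_free _ hintR.submodule_iSupIndep c' (fun s => by
    rw [LinearMap.mem_ker]
    apply hginj
    rw [hgN, hc', map_zero]
    exact hc s)
  refine ⟨R, inferInstance, inferInstance, inferInstance,
    fun x y h => hR₀L (congrArg (algebraMap R L) h), jordan_finiteType R₀ R ‹_› hft, ?_, m, lr, k, hlrinj,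
    hchR, hintR, fun i => (hfree i).1, fun i => (hfree i).2, hu⟩
  exact Algebra.IsAlgebraic.of_injective R.val Subtype.val_injective

/-- beginning of Section 4 of the paper. Let `R₀` be an integral domain,
finitely generated as a `ℤ`-algebra, whose fraction field has characteristic `0`, `V` a finite
rank free `R₀`-module and `A ∈ End_{R₀}(V)`. Then there is an integral domain `R`, finitely
generated as a `ℤ`-algebra, and an injective ring homomorphism `R₀ → R` which is an algebraic
extension (so the induced extension of fraction fields is algebraic), such that over `R` the
endomorphism `A ⊗ R` admits a Jordan decomposition: its characteristic polynomial splits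
completely as `∏ (x − λᵢ)^{kᵢ}` with pairwise distinct `λᵢ ∈ R`, the base change `V ⊗ R` is the
internal direct sum of the generalized eigenspaces `ker (A ⊗ R − λᵢ)^{kᵢ}`, each a finite rank
free `R`-module, and `λᵢ − λⱼ` is a unit for `i ≠ j`. -/
theorem statement11 {R₀ : Type u} [CommRing R₀] [IsDomain R₀] [Algebra.FiniteType ℤ R₀]
    [CharZero (FractionRing R₀)]
    (V : Type u) [AddCommGroup V] [Module R₀ V] [Module.Free R₀ V] [Module.Finite R₀ V]
    (A : Module.End R₀ V) :
    ∃ (R : Type u) (_ : CommRing R) (_ : IsDomain R) (f : R₀ →+* R),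
      Function.Injective f ∧
      Algebra.FiniteType ℤ R ∧
      (∀ x : R, ∃ q : Polynomial R₀, q ≠ 0 ∧ Polynomial.eval₂ f x q = 0) ∧
      (letI : Algebra R₀ R := f.toAlgebra
       ∃ (m : ℕ) (lam : Fin m → R) (k : Fin m → ℕ),
         Function.Injective lam ∧
         LinearMap.charpoly (LinearMap.baseChange R A) =
           ∏ i : Fin m, (Polynomial.X - Polynomial.C (lam i)) ^ k i ∧
         DirectSum.IsInternal (fun i : Fin m =>
           LinearMap.ker ((LinearMap.baseChange R A -
             lam i • (1 : Module.End R (TensorProduct R₀ R V))) ^ k i)) ∧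
         (∀ i : Fin m, Module.Free R
           (LinearMap.ker ((LinearMap.baseChange R A -
             lam i • (1 : Module.End R (TensorProduct R₀ R V))) ^ k i))) ∧
         (∀ i : Fin m, Module.Finite R
           (LinearMap.ker ((LinearMap.baseChange R A -
             lam i • (1 : Module.End R (TensorProduct R₀ R V))) ^ k i))) ∧
         (∀ i j : Fin m, i ≠ j → IsUnit (lam i - lam j))) := by
  have halg0 : Algebra.IsAlgebraic R₀ (AlgebraicClosure (FractionRing R₀)) :=
    (IsFractionRing.comap_isAlgebraic_iff (A := R₀) (K := FractionRing R₀)).2 inferInstance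
  have hinj0 : Function.Injective (algebraMap R₀ (AlgebraicClosure (FractionRing R₀))) := by
    rw [IsScalarTower.algebraMap_eq R₀ (FractionRing R₀)]
    exact (algebraMap (FractionRing R₀) _).injective.comp (IsFractionRing.injective R₀ _)
  obtain ⟨R, i1, i2, i3, hinj, hft, halg, h⟩ :=
    jordan_main (L := AlgebraicClosure (FractionRing R₀)) hinj0 V A
  refine ⟨R, i1, i2, algebraMap R₀ R, hinj, hft, fun x => ?_, ?_⟩
  · exact halg.isAlgebraic x
  · have : (algebraMap R₀ R).toAlgebra = i3 := Algebra.algebra_ext _ _ fun r => rfl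
    rw [this]
    exact h
end
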